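/- Let τ : ℝ³ → ℝ be a continuous compactly supported function such that ∫ τ · ∂ⱼ∂ₖΨ dx = 0 for all smooth compactly supported Ψ : ℝ³ → ℝ, where j ≠ k are two fixed distinct coordinate indices. Then τ = 0. -/

import Mathlib

open MeasureTheory

noncomputable def pd (i : Fin 3) (f : (Fin 3 → ℝ) → ℝ) : (Fin 3 → ℝ) → ℝ :=
  fun x => fderiv ℝ f x (Pi.single i 1)

/-!
If `τ` is integrable and `∂ᵥ φ` integrates to zero against `τ` along with all its translates, then
`t ↦ ∫ φ (x + t v) τ x` has zero derivative, hence is constant. For `v ≠ 0` the translates of `φ`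
escape to infinity, so this function tends to zero as `t → ∞`, and therefore `∫ φ τ = 0`. As the
class of test functions is translation invariant, the derivatives in `∫ ∂ⱼ ∂ₖ Ψ τ = 0` can be
removed one at a time in this way, until the fundamental lemma of the calculus of variations
applies.
-/

open Filter Bornology
open scoped ContDiff Topology

variable {E F : Type*} [NormedAddCommGroup E] [NormedSpace ℝ E] [MeasurableSpace E]
  [NormedAddCommGroup F] [NormedSpace ℝ F] {μ : Measure E} {τ : E → F}

section

variable [OpensMeasurableSpace E] {φ : E → ℝ} {v : E}

theorem hasDerivAt_integral_comp_add_smul {B C : ℝ} (hτ : Integrable τ μ) (hφ : ContDiff ℝ 1 φ)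
    (hB : ∀ x, ‖φ x‖ ≤ B) (hC : ∀ x, ‖fderiv ℝ φ x v‖ ≤ C) (t : ℝ) :
    HasDerivAt (fun s : ℝ => ∫ x, φ (x + s • v) • τ x ∂μ)
      (∫ x, fderiv ℝ φ (x + t • v) v • τ x ∂μ) t := by
  have hφ' : Continuous fun x => fderiv ℝ φ x v :=
    (hφ.continuous_fderiv one_ne_zero).clm_apply continuous_const
  have meas_translate {g : E → ℝ} (hg : Continuous g) (s : ℝ) :
      AEStronglyMeasurable (fun x => g (x + s • v)) μ :=
    (hg.comp (continuous_add_const _)).aestronglyMeasurable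
  have hasDerivAt_translate (x : E) (s : ℝ) :
      HasDerivAt (fun r : ℝ => φ (x + r • v)) (fderiv ℝ φ (x + s • v) v) s := by
    have hray : HasDerivAt (fun r : ℝ => x + r • v) v s := by
      simpa only [one_smul, id] using ((hasDerivAt_id s).smul_const v).const_add x
    exact (hφ.differentiable one_ne_zero _).hasFDerivAt.comp_hasDerivAt s hray
  refine (hasDerivAt_integral_of_dominated_loc_of_deriv_le (bound := fun x => C * ‖τ x‖)
    univ_mem (.of_forall fun s => ?_) ?_ ?_ (.of_forall fun x s _ => ?_) (hτ.norm.const_mul C)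
    (.of_forall fun x s _ => (hasDerivAt_translate x s).smul_const (τ x))).2
  · exact (meas_translate hφ.continuous s).smul hτ.aestronglyMeasurable
  · exact hτ.bdd_smul B (meas_translate hφ.continuous t) (.of_forall fun x => hB _)
  · exact (meas_translate hφ' t).smul hτ.aestronglyMeasurable
  · rw [norm_smul]
    gcongr
    exact hC _


theorem tendsto_integral_comp_add_smul_atTop {B : ℝ} (hτ : Integrable τ μ) (hφ : Continuous φ)
    (hB : ∀ x, ‖φ x‖ ≤ B) (hφ₀ : Tendsto φ (cobounded E) (𝓝 0)) (hv : v ≠ 0) :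
    Tendsto (fun t : ℝ => ∫ x, φ (x + t • v) • τ x ∂μ) atTop (𝓝 0) := by
  have hray (x : E) : Tendsto (fun t : ℝ => x + t • v) atTop (cobounded E) := by
    refine (tendsto_const_add_cobounded x).comp (tendsto_norm_atTop_iff_cobounded.1 ?_)
    simp only [norm_smul]
    exact tendsto_norm_atTop_atTop.atTop_mul_const (norm_pos_iff.2 hv)
  rw [← integral_zero E F (μ := μ)]
  refine tendsto_integral_filter_of_dominated_convergence (fun x => B * ‖τ x‖)
    (.of_forall fun t => ?_) (.of_forall fun t => .of_forall fun x => ?_) (hτ.norm.const_mul B)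
    (.of_forall fun x => ?_)
  · exact (hφ.comp (continuous_add_const _)).aestronglyMeasurable.smul hτ.aestronglyMeasurable
  · rw [norm_smul]
    gcongr
    exact hB _
  · simpa only [zero_smul, Function.comp_apply] using (hφ₀.comp (hray x)).smul_const (τ x)

theorem integral_smul_eq_zero_of_forall_integral_fderiv_comp_add_smul (hτ : Integrable τ μ)
    (hφ : ContDiff ℝ 1 φ) (hφc : HasCompactSupport φ) (hv : v ≠ 0)
    (h : ∀ t : ℝ, ∫ x, fderiv ℝ φ (x + t • v) v • τ x ∂μ = 0) :
    ∫ x, φ x • τ x ∂μ = 0 := by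
  obtain ⟨B, hB⟩ := hφ.continuous.bounded_above_of_compact_support hφc
  obtain ⟨C, hC⟩ := ((hφ.continuous_fderiv one_ne_zero).clm_apply
    continuous_const).bounded_above_of_compact_support (hφc.fderiv_apply ℝ v)
  have hderiv := hasDerivAt_integral_comp_add_smul hτ hφ hB hC
  have hconst (t : ℝ) : ∫ x, φ (x + t • v) • τ x ∂μ = ∫ x, φ x • τ x ∂μ := by
    simpa only [zero_smul, add_zero] using is_const_of_deriv_eq_zero
      (fun s => (hderiv s).differentiableAt) (fun s => (hderiv s).deriv.trans (h s)) t 0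
  have hlim := tendsto_integral_comp_add_smul_atTop hτ hφ.continuous hB
    (hφc.is_zero_at_infty.mono_left Metric.cobounded_le_cocompact) hv
  simp only [hconst] at hlim
  exact tendsto_nhds_unique tendsto_const_nhds hlim

theorem integral_smul_eq_zero_of_forall_integral_iteratedFDeriv (hτ : Integrable τ μ) {n : ℕ}
    {v : Fin n → E} (hv : ∀ i, v i ≠ 0)
    (h : ∀ Ψ : E → ℝ, ContDiff ℝ ∞ Ψ → HasCompactSupport Ψ →
      ∫ x, iteratedFDeriv ℝ n Ψ x v • τ x ∂μ = 0)
    {Ψ : E → ℝ} (hΨ : ContDiff ℝ ∞ Ψ) (hΨc : HasCompactSupport Ψ) :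
    ∫ x, Ψ x • τ x ∂μ = 0 := by
  induction n generalizing Ψ with
  | zero => simpa only [iteratedFDeriv_zero_apply] using h Ψ hΨ hΨc
  | succ n ih =>
    refine ih (v := Fin.tail v) (fun i => hv i.succ) (fun Φ hΦ hΦc => ?_) hΨ hΨc
    have hsmooth : ContDiff ℝ 1 (iteratedFDeriv ℝ n Φ) :=
      hΦ.iteratedFDeriv_right (mod_cast le_top)
    let eval := ContinuousMultilinearMap.apply ℝ (fun _ : Fin n => E) ℝ (Fin.tail v)
    refine integral_smul_eq_zero_of_forall_integral_fderiv_comp_add_smul hτ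
      (eval.contDiff.comp hsmooth) ((hΦc.iteratedFDeriv n).comp_left eval.map_zero) (hv 0)
      fun t => ?_
    have htranslate := h (fun x => Φ (x + t • v 0)) (hΦ.comp (contDiff_id.add contDiff_const))
      (hΦc.comp_homeomorph (Homeomorph.addRight (t • v 0)))
    simpa only [iteratedFDeriv_comp_add_right,
      (hsmooth.differentiable one_ne_zero _).iteratedFDeriv_succ_apply_left'] using htranslate

end

theorem stmt7_general [FiniteDimensional ℝ E] [BorelSpace E] [CompleteSpace F]
    (hτ : Integrable τ μ) {n : ℕ} {v : Fin n → E} (hv : ∀ i, v i ≠ 0)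
    (h : ∀ Ψ : E → ℝ, ContDiff ℝ ∞ Ψ → HasCompactSupport Ψ →
      ∫ x, iteratedFDeriv ℝ n Ψ x v • τ x ∂μ = 0) :
    τ =ᵐ[μ] 0 :=
  ae_eq_zero_of_integral_contDiff_smul_eq_zero hτ.locallyIntegrable fun _ hΨ hΨc =>
    integral_smul_eq_zero_of_forall_integral_iteratedFDeriv hτ hv h hΨ hΨc

theorem pd_pd_eq_iteratedFDeriv {f : (Fin 3 → ℝ) → ℝ} (hf : ContDiff ℝ 2 f) (j k : Fin 3)
    (x : Fin 3 → ℝ) :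
    pd j (pd k f) x = iteratedFDeriv ℝ 2 f x ![Pi.single j 1, Pi.single k 1] := by
  have hdiff : DifferentiableAt ℝ (fderiv ℝ f) x :=
    (hf.fderiv_right (m := 1) le_rfl).differentiable one_ne_zero x
  unfold pd
  simp [iteratedFDeriv_two_apply, fderiv_clm_apply hdiff (differentiableAt_const _)]

theorem stmt7 (τ : (Fin 3 → ℝ) → ℝ) (j k : Fin 3) (hjk : j ≠ k)
    (hcont : Continuous τ) (hsupp : HasCompactSupport τ)
    (h : ∀ Ψ : (Fin 3 → ℝ) → ℝ, ContDiff ℝ (⊤ : ℕ∞) Ψ → HasCompactSupport Ψ →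
      ∫ x, τ x * pd j (pd k Ψ) x = 0) :
    ∀ x, τ x = 0 := by
  have hτ : τ =ᵐ[volume] 0 :=
    stmt7_general (hcont.integrable_of_hasCompactSupport hsupp)
      (v := ![Pi.single j 1, Pi.single k 1]) (by simp [Fin.forall_fin_two]) fun Ψ hΨ hΨc => by
        simpa only [pd_pd_eq_iteratedFDeriv (hΨ.of_le ENat.LEInfty.out), smul_eq_mul,
          mul_comm] using h Ψ hΨ hΨc
  exact congrFun ((hcont.ae_eq_iff_eq volume continuous_const).1 hτ)
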